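/- arXiv:1806.07496 — 2 statements merged into one kernel-verified Lean document; each statement's English description precedes it below -/
import Mathlib

section
/- Let q be a prime power, n, ρ, μ, n_l positive integers with n = μ·n_l, and let S_1,…,S_μ be a partition of the column set [n] with each |S_b| = n_l, and T_1,…,T_μ a partition of the row set [n] with each |T_a| = n_l. Let R : [n]×[n] → [n] be a Latin square that is block-compatible: for all a, b ∈ [μ], all s ∈ [n], and all j, j' ∈ S_b, R(s,j) ∈ T_a if and only if R(s,j') ∈ T_a. Let 𝒞 ⊆ F_q^n be an F_q-linear code such that for every b ∈ [μ], every codeword of 𝒞 whose restriction to S_b is nonzero has at least ρ nonzero coordinates in S_b. Define 𝔹_R = { vd_R(T) : T ∈ 𝒞^n } with vd_R(T)_{R(s,j), j} = c^{(s)}_j. Then 𝔹_R satisfies the row part of (ρ) cover-locality: for every a ∈ [μ], every codeword of 𝔹_R whose restriction to the rows in T_a is a nonzero matrix has cover weight at least ρ on those rows. -/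
/-- `X` is a cover of the matrix `E`: every nonzero entry lies in a row line
(`Sum.inl i`) or a column line (`Sum.inr j`) belonging to `X`. -/
def IsCover {F : Type*} [Zero F] {m n : ℕ} (E : Matrix (Fin m) (Fin n) F)
    (X : Finset (Fin m ⊕ Fin n)) : Prop :=
  ∀ i j, E i j ≠ 0 → Sum.inl i ∈ X ∨ Sum.inr j ∈ X

/-- The cover weight of a matrix: the minimum cardinality of a cover. -/
noncomputable def coverWeight {F : Type*} [Zero F] {m n : ℕ}
    (E : Matrix (Fin m) (Fin n) F) : ℕ :=
  sInf {k | ∃ X : Finset (Fin m ⊕ Fin n), IsCover E X ∧ X.card = k}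

/-- The Hamming weight of a vector: its number of nonzero coordinates. -/
noncomputable def hWt {K : Type*} [Zero K] {n : ℕ} (c : Fin n → K) : ℕ :=
  Nat.card {j : Fin n // c j ≠ 0}

/-- The minimum cover distance of a (linear) array code, as a set of matrices:
the minimum cover weight of a nonzero codeword. -/
noncomputable def minCoverDist {F : Type*} [Zero F] {n : ℕ}
    (S : Set (Matrix (Fin n) (Fin n) F)) : ℕ :=
  sInf {d | ∃ M ∈ S, M ≠ 0 ∧ coverWeight M = d}

/-- The minimum Hamming distance of a (linear) code, as a set of vectors:
the minimum Hamming weight of a nonzero codeword. -/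
noncomputable def minHammingDist {K : Type*} [Zero K] {n : ℕ}
    (S : Set (Fin n → K)) : ℕ :=
  sInf {d | ∃ c ∈ S, c ≠ 0 ∧ hWt c = d}

/-- Restriction of a matrix to a set of rows (other rows are zeroed out). -/
def rowRestrict {F : Type*} [Zero F] {n : ℕ} (Γ : Finset (Fin n))
    (M : Matrix (Fin n) (Fin n) F) : Matrix (Fin n) (Fin n) F :=
  Matrix.of fun i j => if i ∈ Γ then M i j else 0

/-- Restriction of a matrix to a set of columns (other columns are zeroed out). -/
def colRestrict {F : Type*} [Zero F] {n : ℕ} (Γ : Finset (Fin n))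
    (M : Matrix (Fin n) (Fin n) F) : Matrix (Fin n) (Fin n) F :=
  Matrix.of fun i j => if j ∈ Γ then M i j else 0

/-- `(r, ρ)` cover-locality: every row (resp. column) line has a recovery set of at
most `r + ρ - 1` rows (resp. columns) containing it, on which the restricted code
has minimum cover distance at least `ρ`. -/
def CoverLocality {F : Type*} [Field F] {n : ℕ}
    (B : Submodule F (Matrix (Fin n) (Fin n) F)) (r ρ : ℕ) : Prop :=
  (∀ i : Fin n, ∃ Γ : Finset (Fin n), i ∈ Γ ∧ Γ.card ≤ r + ρ - 1 ∧
    ∀ M ∈ B, rowRestrict Γ M ≠ 0 → ρ ≤ coverWeight (rowRestrict Γ M)) ∧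
  (∀ j : Fin n, ∃ Γ : Finset (Fin n), j ∈ Γ ∧ Γ.card ≤ r + ρ - 1 ∧
    ∀ M ∈ B, colRestrict Γ M ≠ 0 → ρ ≤ coverWeight (colRestrict Γ M))

/-- The entries of a matrix at positions `(f j, j)`, `j ∈ J`, lie on pairwise disjoint lines when
`f` is injective on `J`; if they are all nonzero, every cover has at least `J.card` elements. -/
theorem card_le_coverWeight {F : Type*} [Zero F] {m n : ℕ} {E : Matrix (Fin m) (Fin n) F}
    {J : Finset (Fin n)} {f : Fin n → Fin m} (hf : Set.InjOn f J)
    (hE : ∀ j ∈ J, E (f j) j ≠ 0) : J.card ≤ coverWeight E := by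
  refine le_csInf ⟨_, Finset.univ, fun i j _ => Or.inl (Finset.mem_univ _), rfl⟩ ?_
  rintro k ⟨X, hX, rfl⟩
  refine Finset.card_le_card_of_injOn
    (fun j => if Sum.inl (f j) ∈ X then Sum.inl (f j) else Sum.inr j) ?_ ?_
  · intro j hj
    have hcov := hX _ _ (hE j hj)
    dsimp only
    split_ifs with h
    · exact h
    · exact hcov.resolve_left h
  · intro j hj j' hj' h
    dsimp only at h
    split_ifs at h
    · exact hf hj hj' (Sum.inl.inj h)
    · exact Sum.inr.inj h

/-- with `n = μ·n_l`, column-partition `S` and row-partition `Trow`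
into blocks of size `n_l`, and a block-compatible Latin square `R`, if every
codeword of `𝒞` that is nonzero on a column block `S b` has at least `ρ` nonzero
coordinates there, then the array code `𝔹_R = { vd_R(T) : T ∈ 𝒞^n }` satisfies the
row part of `ρ` cover-locality: every codeword whose restriction to the rows
`Trow a` is nonzero has cover weight at least `ρ` on those rows. -/
theorem vd_code_row_cover_locality
    (q n ρ μ nl : ℕ) (hq : IsPrimePow q) (hn : 0 < n) (hρ : 0 < ρ)
    (hμ : 0 < μ) (hnl : 0 < nl) (hmul : n = μ * nl)
    (F : Type) [Field F] [Fintype F] (hcard : Fintype.card F = q)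
    (S : Fin μ → Finset (Fin n)) (Trow : Fin μ → Finset (Fin n))
    (hScard : ∀ b, (S b).card = nl) (hTcard : ∀ a, (Trow a).card = nl)
    (hSpart : ∀ j : Fin n, ∃! b, j ∈ S b)
    (hTpart : ∀ i : Fin n, ∃! a, i ∈ Trow a)
    (R : Fin n → Fin n → Fin n)
    (hR1 : ∀ s, Function.Injective (R s))
    (hR2 : ∀ j, Function.Injective (fun s => R s j))
    (hcompat : ∀ (a b : Fin μ) (s : Fin n), ∀ j ∈ S b, ∀ j' ∈ S b,
      (R s j ∈ Trow a ↔ R s j' ∈ Trow a))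
    (C : Submodule F (Fin n → F))
    (hCloc : ∀ b : Fin μ, ∀ c ∈ C, (∃ j ∈ S b, c j ≠ 0) →
      ρ ≤ Nat.card {j : Fin n // j ∈ S b ∧ c j ≠ 0}) :
    ∀ a : Fin μ, ∀ T : Fin n → (Fin n → F), (∀ s, T s ∈ C) →
      ∀ M : Matrix (Fin n) (Fin n) F, (∀ s j, M (R s j) j = T s j) →
        rowRestrict (Trow a) M ≠ 0 → ρ ≤ coverWeight (rowRestrict (Trow a) M) := by
  classical
  intro a T hT M hM hne
  obtain ⟨i, j, hij⟩ : ∃ i j, rowRestrict (Trow a) M i j ≠ 0 := by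
    by_contra! h
    exact hne (Matrix.ext h)
  obtain ⟨hi, hMij⟩ : i ∈ Trow a ∧ M i j ≠ 0 := by
    simpa [rowRestrict] using hij
  obtain ⟨s, rfl⟩ := Finite.surjective_of_injective (hR2 j) i
  obtain ⟨b, hjb, -⟩ := hSpart j
  have hρJ := hCloc b (T s) (hT s) ⟨j, hjb, hM s j ▸ hMij⟩
  rw [Nat.card_eq_fintype_card, Fintype.card_subtype] at hρJ
  refine hρJ.trans (card_le_coverWeight (hR1 s).injOn fun j' hj' => ?_)
  obtain ⟨hj'b, hTj'⟩ := (Finset.mem_filter.mp hj').2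
  have hrow : R s j' ∈ Trow a := (hcompat a b s j hjb j' hj'b).mp hi
  simpa [rowRestrict, hrow, hM] using hTj'
end

section
/- Let q be a prime power, n, k', r, ρ positive integers, R : [n]×[n] → [n] a Latin square, and 𝒞 ⊆ F_q^n a nonzero F_q-linear code of dimension k' whose minimum Hamming distance attains the Singleton-like locality bound with equality: d_H(𝒞) = n − k' + 1 − (⌈k'/r⌉ − 1)(ρ − 1). Define 𝔹_R = { vd_R(T) : T ∈ 𝒞^n } with vd_R(T)_{R(s,j), j} = c^{(s)}_j, an F_q-linear array code of dimension k = n·k'. Then the minimum cover distance of 𝔹_R attains the cover-metric bound with equality: d_C(𝔹_R) = n − k/n + 1 − (⌈k/(n·r)⌉ − 1)(ρ − 1). -/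
/-- A minimum-size cover exists. -/
theorem exists_isCover_card_eq_coverWeight {F : Type*} [Zero F] {m n : ℕ}
    (E : Matrix (Fin m) (Fin n) F) :
    ∃ X : Finset (Fin m ⊕ Fin n), IsCover E X ∧ X.card = coverWeight E :=
  Nat.sInf_mem (s := {k | ∃ X : Finset (Fin m ⊕ Fin n), IsCover E X ∧ X.card = k})
    ⟨_, Finset.univ, fun i _ _ => Or.inl (Finset.mem_univ (Sum.inl i)), rfl⟩

/-- The cover weight is at least the number of nonzero entries on any partial transversal
`j ↦ (σ j, j)` with `σ` injective. -/
theorem hWt_transversal_le_coverWeight {F : Type*} [Zero F] {m n : ℕ}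
    (E : Matrix (Fin m) (Fin n) F) {σ : Fin n → Fin m} (hσ : Function.Injective σ) :
    hWt (fun j => E (σ j) j) ≤ coverWeight E := by
  classical
  obtain ⟨X, hX, hcard⟩ := exists_isCover_card_eq_coverWeight E
  rw [← hcard, hWt, ← Nat.card_eq_finsetCard X]
  let f : {j : Fin n // E (σ j) j ≠ 0} → X := fun j =>
    if h : Sum.inr j.1 ∈ X then ⟨Sum.inr j.1, h⟩
    else ⟨Sum.inl (σ j.1), (hX _ _ j.2).resolve_right h⟩
  refine Nat.card_le_card_of_injective f fun a b hab => ?_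
  apply Subtype.ext
  by_cases ha : Sum.inr a.1 ∈ X <;> by_cases hb : Sum.inr b.1 ∈ X <;>
    simp [f, ha, hb] at hab
  · exact hab
  · exact hσ hab

/-- The columns in the support of `c` cover the matrix all of whose rows equal `c`. -/
theorem coverWeight_const_rows_le_hWt {F : Type*} [Zero F] {m n : ℕ} (c : Fin n → F) :
    coverWeight (Matrix.of fun (_ : Fin m) j => c j) ≤ hWt c := by
  classical
  refine Nat.sInf_le
    ⟨(Finset.univ.filter fun j => c j ≠ 0).map Function.Embedding.inr, ?_, ?_⟩
  · intro i j h
    right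
    simpa using h
  · rw [Finset.card_map, hWt, Nat.card_eq_fintype_card, Fintype.card_subtype]

/-- The Latin-square array code of a nonzero linear code has minimum cover distance equal to
the minimum Hamming distance of the code. -/
theorem minCoverDist_latinSquare_eq_minHammingDist {F : Type*} [Field F] {n : ℕ} (hn : 0 < n)
    (R : Fin n → Fin n → Fin n) (hR1 : ∀ s, Function.Injective (R s))
    (hR2 : ∀ j, Function.Injective (fun s => R s j))
    (C : Submodule F (Fin n → F)) (hC : C ≠ ⊥) :
    minCoverDist {M : Matrix (Fin n) (Fin n) F |
        ∃ T : Fin n → (Fin n → F), (∀ s, T s ∈ C) ∧ ∀ s j, M (R s j) j = T s j} =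
      minHammingDist (C : Set (Fin n → F)) := by
  set S := {M : Matrix (Fin n) (Fin n) F |
    ∃ T : Fin n → (Fin n → F), (∀ s, T s ∈ C) ∧ ∀ s j, M (R s j) j = T s j}
  have const_mem : ∀ c ∈ C, c ≠ 0 →
      (Matrix.of fun (_ : Fin n) j => c j) ∈ S ∧ (Matrix.of fun (_ : Fin n) j => c j) ≠ 0 := by
    intro c hc hc0
    refine ⟨⟨fun _ => c, fun _ => hc, fun _ _ => rfl⟩, fun h => hc0 ?_⟩
    funext j
    exact congrFun (congrFun h ⟨0, hn⟩) j
  obtain ⟨c₀, hc₀, hc₀0⟩ := Submodule.exists_mem_ne_zero_of_ne_bot hC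
  apply le_antisymm
  · obtain ⟨c, hc, hc0, hd⟩ := Nat.sInf_mem
      (s := {d | ∃ c ∈ (C : Set (Fin n → F)), c ≠ 0 ∧ hWt c = d}) ⟨_, c₀, hc₀, hc₀0, rfl⟩
    rw [minHammingDist, ← hd]
    obtain ⟨hM, hM0⟩ := const_mem c hc hc0
    exact le_trans (Nat.sInf_le (by exact ⟨_, hM, hM0, rfl⟩)) (coverWeight_const_rows_le_hWt c)
  · obtain ⟨M, ⟨T, hT, hMT⟩, hM0, hd⟩ := Nat.sInf_mem
      (s := {d | ∃ M ∈ S, M ≠ 0 ∧ coverWeight M = d})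
      ⟨_, _, (const_mem c₀ hc₀ hc₀0).1, (const_mem c₀ hc₀ hc₀0).2, rfl⟩
    rw [minCoverDist, ← hd]
    obtain ⟨i, j, hij⟩ : ∃ i j, M i j ≠ 0 := by
      by_contra! h
      exact hM0 (Matrix.ext h)
    obtain ⟨s, rfl⟩ := Finite.surjective_of_injective (hR2 j) i
    have hle := hWt_transversal_le_coverWeight M (hR1 s)
    simp only [hMT] at hle
    have hTs : T s ≠ 0 := fun h => hij (by simp [hMT, h])
    exact le_trans (Nat.sInf_le (by exact ⟨T s, hT s, hTs, rfl⟩)) hle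

/-- if the constituent code `𝒞` of dimension `k'` attains the
Singleton-like locality bound `d_H(𝒞) = n - k' + 1 - (⌈k'/r⌉ - 1)(ρ - 1)` with
equality, then the Latin-square array code `𝔹_R = { vd_R(T) : T ∈ 𝒞^n }`, of
dimension `k = n·k'`, attains the cover-metric bound with equality:
`d_C(𝔹_R) = n - k/n + 1 - (⌈k/(n·r)⌉ - 1)(ρ - 1)`. -/
theorem vd_code_optimal
    (q n k' r ρ : ℕ) (hq : IsPrimePow q) (hn : 0 < n) (hk' : 0 < k')
    (hr : 0 < r) (hρ : 0 < ρ)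
    (F : Type) [Field F] [Fintype F] (hcard : Fintype.card F = q)
    (R : Fin n → Fin n → Fin n)
    (hR1 : ∀ s, Function.Injective (R s))
    (hR2 : ∀ j, Function.Injective (fun s => R s j))
    (C : Submodule F (Fin n → F)) (hC : C ≠ ⊥)
    (hdim : Module.finrank F C = k')
    (hopt : (minHammingDist (C : Set (Fin n → F)) : ℚ) =
      (n : ℚ) - (k' : ℚ) + 1 - ((⌈(k' : ℚ) / (r : ℚ)⌉ : ℚ) - 1) * ((ρ : ℚ) - 1))
    (k : ℕ) (hk : k = n * k') :
    (minCoverDist {M : Matrix (Fin n) (Fin n) F |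
        ∃ T : Fin n → (Fin n → F), (∀ s, T s ∈ C) ∧ ∀ s j, M (R s j) j = T s j} : ℚ) =
      (n : ℚ) - (k : ℚ) / (n : ℚ) + 1 -
        ((⌈(k : ℚ) / ((n : ℚ) * (r : ℚ))⌉ : ℚ) - 1) * ((ρ : ℚ) - 1) := by
  have hn0 : (n : ℚ) ≠ 0 := by exact_mod_cast hn.ne'
  have hdiv : (k : ℚ) / (n : ℚ) = k' := by
    rw [hk, Nat.cast_mul, mul_div_cancel_left₀ _ hn0]
  rw [minCoverDist_latinSquare_eq_minHammingDist hn R hR1 hR2 C hC, hopt, ← div_div, hdiv]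
end
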